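/- Let $n \ge 1$, let $A$ be an invertible $n \times n$ real matrix, and let $\Delta > 0$ be an upper bound on the absolute values of all $(n-1) \times (n-1)$ sub-determinants of $A$ (equivalently, on the absolute values of all entries of the adjugate of $A$). Then every column $b_i$ of the adjugate of $A$ satisfies $\|b_i\| \le \sqrt{n}\,\Delta$, and consequently for every index $i$, the Euclidean distance from the row $a_i$ of $A$ to the linear span of the remaining rows $\{a_j : j \ne i\}$ is at least $|\det A| / (\sqrt{n}\,\Delta)$. -/

import Mathlib

open Matrix Metric

/-! By `A * adj A = (det A) • 1`, the `i`-th column of the adjugate is orthogonal to every row of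
`A` but the `i`-th, with which its product is `det A`. By Cauchy–Schwarz, `|det A|` is therefore at
most the norm of this column times the distance from the `i`-th row to the span of the others. -/

theorem l2_norm_le_sqrt_card_mul {ι : Type*} [Fintype ι] {β : ι → Type*}
    [∀ i, SeminormedAddCommGroup (β i)] (v : PiLp 2 β) {C : ℝ} (hv : ∀ i, ‖v i‖ ≤ C) :
    ‖v‖ ≤ √(Fintype.card ι) * C := by
  cases isEmpty_or_nonempty ι with
  | inl _ => simp [PiLp.norm_eq_of_L2]
  | inr h =>
    have hC : 0 ≤ C := (norm_nonneg _).trans (hv h.some)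
    calc ‖v‖ = √(∑ i, ‖v i‖ ^ 2) := PiLp.norm_eq_of_L2 v
      _ ≤ √(∑ _i : ι, C ^ 2) := by gcongr with i; exact hv i
      _ = √(Fintype.card ι) * C := by
        rw [Finset.sum_const, Finset.card_univ, nsmul_eq_mul, Real.sqrt_mul (Nat.cast_nonneg _),
          Real.sqrt_sq hC]

theorem l2_norm_toLp_star {ι R : Type*} [Fintype ι] [SeminormedAddCommGroup R] [StarAddMonoid R]
    [NormedStarGroup R] (v : ι → R) : ‖WithLp.toLp 2 (star v)‖ = ‖WithLp.toLp 2 v‖ := by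
  simp only [PiLp.norm_eq_of_L2, Pi.star_apply, norm_star]

theorem norm_inner_le_norm_mul_infDist_of_mem_orthogonal {𝕜 E : Type*} [RCLike 𝕜]
    [NormedAddCommGroup E] [InnerProductSpace 𝕜 E] {K : Submodule 𝕜 E} {b : E} (hb : b ∈ Kᗮ)
    (x : E) :
    ‖inner 𝕜 b x‖ ≤ ‖b‖ * infDist x K := by
  rcases (norm_nonneg b).eq_or_lt with hb0 | hb0
  · simp [norm_eq_zero.mp hb0.symm]
  · rw [← div_le_iff₀' hb0, le_infDist ⟨0, K.zero_mem⟩]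
    intro y hy
    rw [div_le_iff₀' hb0, dist_eq_norm]
    calc ‖inner 𝕜 b x‖ = ‖inner 𝕜 b (x - y)‖ := by
          rw [inner_sub_right, K.inner_left_of_mem_orthogonal hy hb, sub_zero]
      _ ≤ ‖b‖ * ‖x - y‖ := norm_inner_le_norm _ _

theorem norm_adjugate_apply_le_of_norm_det_submatrix_le {R : Type*} [SeminormedCommRing R] {n : ℕ}
    (A : Matrix (Fin n) (Fin n) R) {C : ℝ}
    (hA : ∀ r c : Fin (n - 1) → Fin n, Function.Injective r → Function.Injective c →
      ‖(A.submatrix r c).det‖ ≤ C) (i j : Fin n) :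
    ‖A.adjugate i j‖ ≤ C := by
  cases n with
  | zero => exact i.elim0
  | succ m =>
    have hminor : ‖(A.submatrix j.succAbove i.succAbove).det‖ ≤ C :=
      hA _ _ Fin.succAbove_right_injective Fin.succAbove_right_injective
    rw [adjugate_fin_succ_eq_det_submatrix]
    rcases neg_one_pow_eq_or R (j + i : ℕ) with hsign | hsign <;> simpa [hsign] using hminor

section RowDistance

variable {𝕜 ι : Type*} [RCLike 𝕜] [Fintype ι] [DecidableEq ι]

theorem inner_star_adjugate_col_row (A : Matrix ι ι 𝕜) (i j : ι) :
    inner 𝕜 (WithLp.toLp 2 (star (A.adjugate.col i))) (WithLp.toLp 2 (A.row j)) =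
      if j = i then A.det else 0 := by
  calc inner 𝕜 (WithLp.toLp 2 (star (A.adjugate.col i))) (WithLp.toLp 2 (A.row j))
      = (A * A.adjugate) j i := by
        rw [EuclideanSpace.inner_toLp_toLp, star_star]; rfl
    _ = if j = i then A.det else 0 := by
        rw [mul_adjugate, Matrix.smul_apply, one_apply, smul_eq_mul, mul_ite, mul_one, mul_zero]

theorem star_adjugate_col_mem_orthogonal_span_row_ne (A : Matrix ι ι 𝕜) (i : ι) :
    WithLp.toLp 2 (star (A.adjugate.col i)) ∈
      (Submodule.span 𝕜 {v | ∃ j, j ≠ i ∧ v = WithLp.toLp 2 (A.row j)})ᗮ := by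
  rw [← Submodule.span_singleton_le_iff_mem, ← Submodule.isOrtho_iff_le, Submodule.isOrtho_span]
  rintro _ rfl _ ⟨j, hj, rfl⟩
  rw [inner_star_adjugate_col_row, if_neg hj]

theorem norm_det_le_norm_adjugate_col_mul_infDist_row (A : Matrix ι ι 𝕜) (i : ι) :
    ‖A.det‖ ≤ ‖WithLp.toLp 2 (A.adjugate.col i)‖ *
      infDist (WithLp.toLp 2 (A.row i))
        (Submodule.span 𝕜 {v | ∃ j, j ≠ i ∧ v = WithLp.toLp 2 (A.row j)} :
          Set (EuclideanSpace 𝕜 ι)) := by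
  have hdist := norm_inner_le_norm_mul_infDist_of_mem_orthogonal
    (star_adjugate_col_mem_orthogonal_span_row_ne A i) (WithLp.toLp 2 (A.row i))
  rwa [inner_star_adjugate_col_row, if_pos rfl, l2_norm_toLp_star] at hdist

theorem adjugate_column_norm_and_row_distance_general (A : Matrix ι ι 𝕜) {Δ : ℝ} (hΔ : 0 < Δ)
    (hadj : ∀ i j, ‖A.adjugate i j‖ ≤ Δ) :
    (∀ j, ‖WithLp.toLp 2 (A.adjugate.col j)‖ ≤ √(Fintype.card ι) * Δ) ∧
    ∀ i, ‖A.det‖ / (√(Fintype.card ι) * Δ) ≤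
      infDist (WithLp.toLp 2 (A.row i))
        (Submodule.span 𝕜 {v | ∃ j, j ≠ i ∧ v = WithLp.toLp 2 (A.row j)} :
          Set (EuclideanSpace 𝕜 ι)) := by
  have hcol (j : ι) : ‖WithLp.toLp 2 (A.adjugate.col j)‖ ≤ √(Fintype.card ι) * Δ :=
    l2_norm_le_sqrt_card_mul _ fun i => hadj i j
  refine ⟨hcol, fun i => ?_⟩
  have : Nonempty ι := ⟨i⟩
  rw [div_le_iff₀' (by positivity)]
  exact (norm_det_le_norm_adjugate_col_mul_infDist_row A i).trans
    (mul_le_mul_of_nonneg_right (hcol i) infDist_nonneg)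

end RowDistance

/-- If all `(n-1) × (n-1)` sub-determinants of an invertible `n × n` real
matrix `A` are bounded in absolute value by `Δ`, then every column of the
adjugate has Euclidean norm at most `√n · Δ`, and the distance from each row
`a i` of `A` to the span of the remaining rows is at least `|det A|/(√n Δ)`. -/
theorem adjugate_column_norm_and_row_distance (n : ℕ) (hn : 1 ≤ n)
    (A : Matrix (Fin n) (Fin n) ℝ) (hA : IsUnit A.det) (Δ : ℝ) (hΔ : 0 < Δ)
    (hsub : ∀ (r c : Fin (n - 1) → Fin n), Function.Injective r →
      Function.Injective c → |(A.submatrix r c).det| ≤ Δ) :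
    (∀ j : Fin n,
      ‖(WithLp.equiv 2 (Fin n → ℝ)).symm (fun i => A.adjugate i j)‖ ≤
        Real.sqrt n * Δ) ∧
    ∀ i : Fin n,
      |A.det| / (Real.sqrt n * Δ) ≤
        Metric.infDist ((WithLp.equiv 2 (Fin n → ℝ)).symm (A i))
          (Submodule.span ℝ
            {v | ∃ j : Fin n, j ≠ i ∧ v = (WithLp.equiv 2 (Fin n → ℝ)).symm (A j)} :
            Set (EuclideanSpace ℝ (Fin n))) := by
  have h := adjugate_column_norm_and_row_distance_general A hΔ
    (norm_adjugate_apply_le_of_norm_det_submatrix_le A hsub)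
  rwa [Fintype.card_fin] at h
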